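/- Let Y be a CAT(0) space and E : Y → [0, +∞] a λ-convex and lower semicontinuous functional with D(E) nonempty, λ ∈ ℝ. Let y, z ∈ Y and let (y_t), (z_t) be the gradient flow trajectories for E starting from y and z. Then for any t ≥ s > 0 it holds d²(y_t, z_s) ≤ e^{−2λs}·( d²(y, z) + 2(t−s)·(E(z) − E(y)) + 2·|∂⁻E|²(y)·∫_0^{t−s} θ_λ(r) dr − λ·∫_0^{t−s} d²(y_r, z) dr ), where θ_λ(t) := ∫_0^t e^{−2λr} dr. -/

import Mathlib

open Filter MeasureTheory Set Bornology
open scoped ENNReal Topology NNReal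

/-- A (constant-speed, minimizing) geodesic defined on `[0,1]`:
`d(γ_s, γ_t) = |s - t| * d(γ_0, γ_1)` for all `s, t ∈ [0,1]`. -/
def IsGeodesic {Y : Type*} [MetricSpace Y] (γ : ℝ → Y) : Prop :=
  ∀ s ∈ Set.Icc (0:ℝ) 1, ∀ t ∈ Set.Icc (0:ℝ) 1,
    dist (γ s) (γ t) = |s - t| * dist (γ 0) (γ 1)

/-- A metric space is geodesic if every two points are joined by a geodesic. -/
def GeodesicSpace (Y : Type*) [MetricSpace Y] : Prop :=
  ∀ x y : Y, ∃ γ : ℝ → Y, IsGeodesic γ ∧ γ 0 = x ∧ γ 1 = y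

/-- The CAT(0) condition: geodesic space satisfying the comparison inequality
`d²(γ_t, a) ≤ (1-t)·d²(γ_0, a) + t·d²(γ_1, a) − t(1-t)·d²(γ_0, γ_1)`.
(Completeness is required separately as a typeclass assumption.) -/
def Cat0 (Y : Type*) [MetricSpace Y] : Prop :=
  GeodesicSpace Y ∧
    ∀ γ : ℝ → Y, IsGeodesic γ → ∀ a : Y, ∀ t ∈ Set.Icc (0:ℝ) 1,
      dist (γ t) a ^ 2 ≤ (1 - t) * dist (γ 0) a ^ 2 + t * dist (γ 1) a ^ 2
        - t * (1 - t) * dist (γ 0) (γ 1) ^ 2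

/-- A subset is geodesically convex if every geodesic joining two of its points
lies entirely inside it. -/
def GeodesicConvex {Y : Type*} [MetricSpace Y] (C : Set Y) : Prop :=
  ∀ γ : ℝ → Y, IsGeodesic γ → γ 0 ∈ C → γ 1 ∈ C → ∀ t ∈ Set.Icc (0:ℝ) 1, γ t ∈ C

/-- `lam`-convexity along geodesics of an extended-real-valued functional:
`E(γ_t) ≤ (1-t)E(γ_0) + tE(γ_1) − (lam/2)t(1−t)d²(γ_0,γ_1)`. -/
def LamConvex {Y : Type*} [MetricSpace Y] (lam : ℝ) (E : Y → EReal) : Prop :=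
  ∀ γ : ℝ → Y, IsGeodesic γ → ∀ t ∈ Set.Icc (0:ℝ) 1,
    E (γ t) ≤ ((1 - t : ℝ) : EReal) * E (γ 0) + ((t : ℝ) : EReal) * E (γ 1)
      - ((lam / 2 * t * (1 - t) * dist (γ 0) (γ 1) ^ 2 : ℝ) : EReal)

/-- The descending slope `|∂⁻E|(y) = limsup_{z→y} (E(y)−E(z))⁺ / d(y,z)`,
set to `∞` outside the domain `{E < ∞}` of `E`. -/
noncomputable def descendingSlope {Y : Type*} [MetricSpace Y] (E : Y → EReal) (y : Y) :
    ℝ≥0∞ :=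
  if E y = ⊤ then ⊤
  else Filter.limsup (fun z => ENNReal.ofReal ((E y - E z).toReal / dist y z))
      (nhdsWithin y {y}ᶜ)

/-- `ω(y; (y_n)) := limsup_n d(y, y_n)²`. -/
noncomputable def asymptoticRadius {Y : Type*} [MetricSpace Y] (yn : ℕ → Y) (y : Y) : ℝ :=
  Filter.limsup (fun n => dist y (yn n) ^ 2) Filter.atTop

/-- Weak convergence of a bounded sequence: `y` is an asymptotic center
(i.e. a minimizer of `ω(·; ·)`) of every subsequence. -/
def WeakConv {Y : Type*} [MetricSpace Y] (yn : ℕ → Y) (y : Y) : Prop :=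
  Bornology.IsBounded (Set.range yn) ∧
    ∀ φ : ℕ → ℕ, StrictMono φ →
      ∀ z : Y, asymptoticRadius (yn ∘ φ) y ≤ asymptoticRadius (yn ∘ φ) z

/-- Absolute continuity on a set `I ⊆ ℝ`: there is a nonnegative integrable `g`
with `d(y_s, y_t) ≤ ∫_s^t g` for `s ≤ t` in `I`. -/
def AbsContOnSet {Y : Type*} [MetricSpace Y] (y : ℝ → Y) (I : Set ℝ) : Prop :=
  ∃ g : ℝ → ℝ, (∀ t, 0 ≤ g t) ∧ MeasureTheory.IntegrableOn g I ∧
    ∀ s ∈ I, ∀ t ∈ I, s ≤ t → dist (y s) (y t) ≤ ∫ r in s..t, g r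

/-- Absolute continuity on the interval `[a,b]`. -/
def AbsContOn {Y : Type*} [MetricSpace Y] (y : ℝ → Y) (a b : ℝ) : Prop :=
  AbsContOnSet y (Set.Icc a b)

/-- Local absolute continuity on `(0,∞)`. -/
def LocAbsCont {Y : Type*} [MetricSpace Y] (y : ℝ → Y) : Prop :=
  ∀ a b : ℝ, 0 < a → a ≤ b → AbsContOn y a b

/-- The Evolution Variational Inequality: for every `z`, for a.e. `t > 0` the
derivative of `t ↦ ½ d²(y_t, z)` exists and
`(d/dt)(½d²(y_t,z)) + E(y_t) + (lam/2)d²(y_t,z) ≤ E(z)`. -/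
def EVI {Y : Type*} [MetricSpace Y] (lam : ℝ) (E : Y → EReal) (y : ℝ → Y) : Prop :=
  ∀ z : Y, ∀ᵐ t ∂(MeasureTheory.volume.restrict (Set.Ioi (0:ℝ))),
    ∃ d' : ℝ, HasDerivAt (fun s => dist (y s) z ^ 2 / 2) d' t ∧
      (d' : EReal) + E (y t) + ((lam / 2 * dist (y t) z ^ 2 : ℝ) : EReal) ≤ E z

/-- A gradient flow trajectory for `E` starting from `y₀`: a locally absolutely
continuous curve on `(0,∞)` converging to `y₀` at `0` and satisfying the EVI. -/
def GradientFlow {Y : Type*} [MetricSpace Y] (lam : ℝ) (E : Y → EReal) (y₀ : Y)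
    (y : ℝ → Y) : Prop :=
  LocAbsCont y ∧ Filter.Tendsto y (nhdsWithin 0 (Set.Ioi 0)) (nhds y₀) ∧ EVI lam E y


/-! ### Real-variable lemmas -/

/-- An integral inequality on compact subintervals of `(0,∞)` with continuous data extends
to subintervals of `[0,∞)`. -/
theorem sub_le_intervalIntegral_of_pos {f k : ℝ → ℝ} (hf : Continuous f) (hk : Continuous k)
    (h : ∀ p q, 0 < p → p ≤ q → f q - f p ≤ ∫ r in p..q, k r) {p q : ℝ}
    (hp : 0 ≤ p) (hpq : p ≤ q) : f q - f p ≤ ∫ r in p..q, k r := by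
  rcases hpq.eq_or_lt with rfl | hlt
  · simp
  have hprim : Continuous fun x => ∫ r in x..q, k r := by
    simp_rw [fun x => intervalIntegral.integral_symm (μ := volume) (f := k) q x]
    exact (intervalIntegral.continuous_primitive (fun _ _ => hk.intervalIntegrable _ _) q).neg
  have h1 : Tendsto (fun x => f q - f x) (𝓝[>] p) (𝓝 (f q - f p)) :=
    ((continuous_const.sub hf).tendsto p).mono_left nhdsWithin_le_nhds
  have h2 : Tendsto (fun x => ∫ r in x..q, k r) (𝓝[>] p) (𝓝 (∫ r in p..q, k r)) :=
    (hprim.tendsto p).mono_left nhdsWithin_le_nhds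
  refine le_of_tendsto_of_tendsto h1 h2 ?_
  filter_upwards [Ioo_mem_nhdsGT hlt] with x hx
  exact h x q (hp.trans_lt hx.1) hx.2.le

/-- An integral inequality bounds the right Dini derivative. -/
theorem frequently_slope_lt_of_sub_le_intervalIntegral {f k : ℝ → ℝ} (hk : Continuous k)
    {x : ℝ} (h : ∀ q, x ≤ q → f q - f x ≤ ∫ r in x..q, k r) {r : ℝ} (hr : k x < r) :
    ∃ᶠ z in 𝓝[>] x, (z - x)⁻¹ * (f z - f x) < r := by
  have hd : HasDerivAt (fun z => ∫ r in x..z, k r) (k x) x :=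
    intervalIntegral.integral_hasDerivAt_right (hk.intervalIntegrable _ _)
      (hk.stronglyMeasurableAtFilter _ _) hk.continuousAt
  have hlim := hd.tendsto_slope.mono_left
    (nhdsWithin_mono x (fun z (hz : x < z) => hz.ne') : 𝓝[>] x ≤ 𝓝[≠] x)
  have hev := hlim.eventually (gt_mem_nhds hr)
  refine Eventually.frequently ?_
  filter_upwards [hev, self_mem_nhdsWithin] with z hz hxz
  refine lt_of_le_of_lt ?_ hz
  have : 0 < z - x := sub_pos.2 hxz
  simp only [slope, intervalIntegral.integral_same, vsub_eq_sub, sub_zero, smul_eq_mul]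
  exact mul_le_mul_of_nonneg_left (h z hxz.le) (inv_nonneg.2 this.le)

/-- The integral form of Grönwall's inequality, for a rate of arbitrary sign. -/
theorem le_mul_exp_of_sub_le_intervalIntegral {f : ℝ → ℝ} (hf : Continuous f) {K : ℝ}
    (h : ∀ p q, 0 ≤ p → p ≤ q → f q - f p ≤ ∫ r in p..q, K * f r) {s : ℝ} (hs : 0 ≤ s) :
    f s ≤ f 0 * Real.exp (K * s) := by
  have := le_gronwallBound_of_liminf_deriv_right_le (f := f) (f' := fun x => K * f x)
    (δ := f 0) (K := K) (ε := 0) (a := 0) (b := s) hf.continuousOn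
    (fun x hx r hr => frequently_slope_lt_of_sub_le_intervalIntegral
      (k := fun x => K * f x) (continuous_const.mul hf) (fun q hq => h x q hx.1 hq) hr)
    le_rfl (fun x _ => by simp) s ⟨hs, le_rfl⟩
  simpa [gronwallBound_ε0] using this

theorem gronwallBound_pos {δ K ε x : ℝ} (hδ : 0 < δ) (hε : 0 ≤ ε) (hx : 0 ≤ x) :
    0 < gronwallBound δ K ε x := by
  rcases eq_or_ne K 0 with rfl | hK
  · rw [gronwallBound_K0]; positivity
  rw [gronwallBound_of_K_ne_0 hK]
  beta_reduce
  have h1 : 0 ≤ (Real.exp (K * x) - 1) / K := by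
    rcases hK.lt_or_gt with hK | hK
    · refine div_nonneg_of_nonpos ?_ hK.le
      have := Real.exp_le_one_iff.2 (mul_nonpos_of_nonpos_of_nonneg hK.le hx)
      linarith
    · refine div_nonneg ?_ hK.le
      have := Real.one_le_exp (mul_nonneg hK.le hx)
      linarith
  have h2 : ε / K * (Real.exp (K * x) - 1) = ε * ((Real.exp (K * x) - 1) / K) := by ring
  rw [h2]
  positivity

/-- If `½ f²` has rate at most `S f - λ f²` and `f` starts from zero, then `f` is dominated by
the solution of `β' = S - λ β` starting from zero. -/
theorem le_gronwallBound_of_half_sq_sub_le {f : ℝ → ℝ} (hf : Continuous f) (hf0 : f 0 = 0)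
    (hnn : ∀ x, 0 ≤ f x) {S lam : ℝ} (hS : 0 ≤ S)
    (h : ∀ p q, 0 ≤ p → p ≤ q →
      f q ^ 2 / 2 - f p ^ 2 / 2 ≤ ∫ r in p..q, (S * f r - lam * f r ^ 2))
    {s : ℝ} (hs : 0 ≤ s) : f s ≤ gronwallBound 0 (-lam) S s := by
  have key : ∀ ε, 0 < ε → f s ≤ gronwallBound ε (-lam) (S + ε) s := by
    intro ε hε
    set β : ℝ → ℝ := gronwallBound ε (-lam) (S + ε) with hβ
    have hpos : ∀ x, 0 ≤ x → 0 < β x := fun x hx => gronwallBound_pos hε (by positivity) hx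
    have hd : ∀ x, HasDerivAt (fun x => β x ^ 2 / 2) (β x * (-lam * β x + (S + ε))) x := by
      intro x
      refine (((hasDerivAt_gronwallBound ε (-lam) (S + ε) x).pow 2).div_const 2).congr_deriv ?_
      simp only [hβ]; push_cast; ring
    have := image_le_of_liminf_slope_right_lt_deriv_boundary (a := 0) (b := s)
      (f := fun x => f x ^ 2 / 2) (f' := fun x => S * f x - lam * f x ^ 2)
      (by fun_prop)
      (fun x hx r hr => frequently_slope_lt_of_sub_le_intervalIntegral
        (f := fun x => f x ^ 2 / 2)
        (k := fun x => S * f x - lam * f x ^ 2) (by fun_prop) (fun q hq => h x q hx.1 hq) hr)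
      (B := fun x => β x ^ 2 / 2) (by simp [hf0]; positivity) hd
      (fun x hx heq => ?_) ⟨hs, le_rfl⟩
    · exact (sq_le_sq₀ (hnn s) (hpos s hs).le).1 (by linarith)
    · have hb := hpos x hx.1
      have : f x = β x := (sq_eq_sq₀ (hnn x) hb.le).1 (by linarith)
      rw [this]
      nlinarith [mul_pos hε hb]
  have hlim : Tendsto (fun ε => gronwallBound ε (-lam) (S + ε) s) (𝓝[>] 0)
      (𝓝 (gronwallBound 0 (-lam) S s)) := by
    have hc : Continuous fun ε => gronwallBound ε (-lam) (S + ε) s := by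
      unfold gronwallBound
      split_ifs <;> fun_prop
    simpa using (hc.tendsto 0).mono_left nhdsWithin_le_nhds
  exact ge_of_tendsto hlim (by filter_upwards [self_mem_nhdsWithin] with ε hε using key ε hε)

theorem intervalIntegral_exp_neg_two_mul (lam t : ℝ) (hl : lam ≠ 0) :
    ∫ q in (0:ℝ)..t, Real.exp (-2 * lam * q) = (1 - Real.exp (-2 * lam * t)) / (2 * lam) := by
  rw [intervalIntegral.integral_comp_mul_left (f := Real.exp) (by simpa using hl), integral_exp]
  simp
  field_simp
  ring

/-- The maximal energy dissipation along the comparison solution. -/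
theorem mul_sub_half_sq_le_of_le_gronwallBound {lam S x t : ℝ} (hS : 0 ≤ S)
    (hx : x ≤ gronwallBound 0 (-lam) S t) (hx0 : 0 ≤ x) :
    S * x - lam / 2 * x ^ 2 ≤ S ^ 2 * ∫ q in (0:ℝ)..t, Real.exp (-2 * lam * q) := by
  rcases eq_or_ne lam 0 with rfl | hl
  · simp [gronwallBound_K0] at hx ⊢
    nlinarith
  rw [gronwallBound_of_K_ne_0 (neg_ne_zero.2 hl)] at hx
  beta_reduce at hx
  rw [intervalIntegral_exp_neg_two_mul lam t hl]
  set e := Real.exp (-lam * t) with he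
  have hpos : 0 < e := Real.exp_pos _
  have h2 : Real.exp (-2 * lam * t) = e ^ 2 := by
    rw [he, ← Real.exp_nat_mul]; congr 1; push_cast; ring
  rw [h2]
  set B := 0 * e + S / -lam * (e - 1) with hB
  have hlB : lam * B = S * (1 - e) := by rw [hB]; field_simp; ring
  have hval : S ^ 2 * ((1 - e ^ 2) / (2 * lam)) = S * B - lam / 2 * B ^ 2 := by
    rw [hB]; field_simp; ring
  rw [hval]
  have hfac : (S * B - lam / 2 * B ^ 2) - (S * x - lam / 2 * x ^ 2)
      = (B - x) * (S - lam * ((B + x) / 2)) := by ring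
  have h3 : 0 ≤ S - lam * ((B + x) / 2) := by
    rcases hl.lt_or_gt with h | h
    · nlinarith
    · nlinarith [mul_nonneg hS hpos.le]
  nlinarith [mul_nonneg (sub_nonneg.2 hx) h3]

theorem tendsto_inv_mul_intervalIntegral_sub {G : ℝ → ℝ} (hG : Continuous G) (P Q : ℝ) :
    Tendsto (fun h => h⁻¹ * ∫ t in P..Q, (G (t + h) - G t)) (𝓝[>] 0) (𝓝 (G Q - G P)) := by
  have hprim : ∀ x, HasDerivAt (fun z => ∫ r in (0:ℝ)..z, G r) (G x) x := fun x =>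
    intervalIntegral.integral_hasDerivAt_right (hG.intervalIntegrable _ _)
      (hG.stronglyMeasurableAtFilter _ _) hG.continuousAt
  have hd : HasDerivAt (fun h => (∫ r in (0:ℝ)..(Q + h), G r) - ∫ r in (0:ℝ)..(P + h), G r)
      (G Q - G P) 0 := by
    refine HasDerivAt.sub ?_ ?_
    · exact HasDerivAt.comp_const_add (f := fun z => ∫ r in (0:ℝ)..z, G r) Q 0
        (by simpa using hprim Q)
    · exact HasDerivAt.comp_const_add (f := fun z => ∫ r in (0:ℝ)..z, G r) P 0
        (by simpa using hprim P)
  refine hd.tendsto_slope_zero_right.congr fun h => ?_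
  simp only [zero_add, add_zero, smul_eq_mul]
  have hshift : Continuous fun t => G (t + h) := by fun_prop
  rw [intervalIntegral.integral_sub (hshift.intervalIntegrable _ _) (hG.intervalIntegrable _ _),
    intervalIntegral.integral_comp_add_right,
    intervalIntegral.integral_interval_sub_left (hG.intervalIntegrable _ _)
      (hG.intervalIntegrable _ _),
    intervalIntegral.integral_interval_sub_left (hG.intervalIntegrable _ _)
      (hG.intervalIntegrable _ _)]

theorem intervalIntegral_eq_mul_unit {g : ℝ → ℝ} (t h : ℝ) :
    ∫ r in t..(t + h), g r = h * ∫ x in (0:ℝ)..1, g (t + h * x) := by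
  simp

/-- Doubling of variables: partial integral inequalities with exchanged sources `α`, `β`
give an integral inequality on the diagonal. -/
theorem diag_sub_le_of_partial {D : ℝ → ℝ → ℝ} (hD : Continuous (Function.uncurry D))
    {α β : ℝ → ℝ} (hα : Integrable α) (hβ : Integrable β) {c P Q : ℝ} (hPQ : P ≤ Q)
    (h₁ : ∀ᵐ t, t ∈ Icc P (Q + 1) → ∀ p q, P ≤ p → p ≤ q → q ≤ Q + 1 →
      D q t - D p t ≤ ∫ r in p..q, (β t - α r - c * D r t))
    (h₂ : ∀ᵐ t, t ∈ Icc P (Q + 1) → ∀ p q, P ≤ p → p ≤ q → q ≤ Q + 1 →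
      D t q - D t p ≤ ∫ r in p..q, (α t - β r - c * D t r)) :
    D Q Q - D P P ≤ ∫ r in P..Q, (-(2 * c)) * D r r := by
  have hDc : ∀ {X : Type} [TopologicalSpace X] {f g : X → ℝ}, Continuous f → Continuous g →
      Continuous fun x => D (f x) (g x) := fun hf hg => hD.comp (hf.prodMk hg)
  set A : ℝ → ℝ := fun t => ∫ r in (0:ℝ)..t, α r with hA
  set B : ℝ → ℝ := fun t => ∫ r in (0:ℝ)..t, β r with hB
  have hAc : Continuous A :=
    intervalIntegral.continuous_primitive (fun _ _ => hα.intervalIntegrable) 0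
  have hBc : Continuous B :=
    intervalIntegral.continuous_primitive (fun _ _ => hβ.intervalIntegrable) 0
  have hAsub : ∀ p q, ∫ r in p..q, α r = A q - A p := fun p q =>
    (intervalIntegral.integral_interval_sub_left hα.intervalIntegrable
      hα.intervalIntegrable).symm
  have hBsub : ∀ p q, ∫ r in p..q, β r = B q - B p := fun p q =>
    (intervalIntegral.integral_interval_sub_left hβ.intervalIntegrable
      hβ.intervalIntegrable).symm
  set Φ : ℝ → ℝ → ℝ := fun h t => ∫ x in (0:ℝ)..1, D (t + h * x) (t + h) with hΦ
  set Ψ : ℝ → ℝ → ℝ := fun h t => ∫ x in (0:ℝ)..1, D t (t + h * x) with hΨ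
  have hΦc : Continuous (Function.uncurry Φ) :=
    intervalIntegral.continuous_parametric_intervalIntegral_of_continuous'
      (f := fun (z : ℝ × ℝ) x => D (z.2 + z.1 * x) (z.2 + z.1))
      (hDc (by fun_prop) (by fun_prop)) 0 1
  have hΨc : Continuous (Function.uncurry Ψ) :=
    intervalIntegral.continuous_parametric_intervalIntegral_of_continuous'
      (f := fun (z : ℝ × ℝ) x => D z.2 (z.2 + z.1 * x))
      (hDc (by fun_prop) (by fun_prop)) 0 1
  have hΦh : ∀ h, Continuous (Φ h) := fun h => hΦc.comp (by fun_prop : Continuous fun t => (h, t))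
  have hΨh : ∀ h, Continuous (Ψ h) := fun h => hΨc.comp (by fun_prop : Continuous fun t => (h, t))
  have hIΦ : Tendsto (fun h => ∫ t in P..Q, Φ h t) (𝓝[>] 0) (𝓝 (∫ t in P..Q, D t t)) := by
    have := ((intervalIntegral.continuous_parametric_intervalIntegral_of_continuous'
      hΦc P Q (μ := volume)).tendsto 0).mono_left (nhdsWithin_le_nhds (s := Ioi 0))
    simpa [hΦ] using this
  have hIΨ : Tendsto (fun h => ∫ t in P..Q, Ψ h t) (𝓝[>] 0) (𝓝 (∫ t in P..Q, D t t)) := by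
    have := ((intervalIntegral.continuous_parametric_intervalIntegral_of_continuous'
      hΨc P Q (μ := volume)).tendsto 0).mono_left (nhdsWithin_le_nhds (s := Ioi 0))
    simpa [hΨ] using this
  have hF : Continuous fun t => D t t := hDc continuous_id continuous_id
  have hptwise : ∀ h ∈ Ioo (0:ℝ) 1, ∀ᵐ t, t ∈ Icc P Q →
      D (t + h) (t + h) - D t t ≤ h * (β (t + h) + α t - c * Φ h t - c * Ψ h t)
        - (A (t + h) - A t) - (B (t + h) - B t) := by
    intro h hh
    have hshift := (measurePreserving_add_right volume h).quasiMeasurePreserving.ae h₁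
    filter_upwards [hshift, h₂] with t ht1 ht2 htPQ
    have e1 := ht1 ⟨by linarith [htPQ.1, hh.1], by linarith [htPQ.2, hh.2]⟩ t (t + h) htPQ.1
      (by linarith [hh.1]) (by linarith [htPQ.2, hh.2])
    have e2 := ht2 ⟨htPQ.1, by linarith [htPQ.2]⟩ t (t + h) htPQ.1
      (by linarith [hh.1]) (by linarith [htPQ.2, hh.2])
    have c1 : Continuous fun r => c * D r (t + h) :=
      continuous_const.mul (hDc continuous_id continuous_const)
    have c2 : Continuous fun r => c * D t r :=
      continuous_const.mul (hDc continuous_const continuous_id)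
    rw [intervalIntegral.integral_sub
        (intervalIntegrable_const.sub hα.intervalIntegrable) (c1.intervalIntegrable _ _),
      intervalIntegral.integral_sub intervalIntegrable_const hα.intervalIntegrable,
      intervalIntegral.integral_const, intervalIntegral.integral_const_mul, hAsub,
      intervalIntegral_eq_mul_unit] at e1
    rw [intervalIntegral.integral_sub
        (intervalIntegrable_const.sub hβ.intervalIntegrable) (c2.intervalIntegrable _ _),
      intervalIntegral.integral_sub intervalIntegrable_const hβ.intervalIntegrable,
      intervalIntegral.integral_const, intervalIntegral.integral_const_mul, hBsub,
      intervalIntegral_eq_mul_unit] at e2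
    simp only [add_sub_cancel_left, smul_eq_mul] at e1 e2
    simp only [hΦ, hΨ]
    linarith
  have hL := tendsto_inv_mul_intervalIntegral_sub hF P Q
  have hLA := tendsto_inv_mul_intervalIntegral_sub hAc P Q
  have hLB := tendsto_inv_mul_intervalIntegral_sub hBc P Q
  have hBlim : Tendsto (fun h => B (Q + h) - B (P + h)) (𝓝[>] 0) (𝓝 (B Q - B P)) := by
    have : Continuous fun h => B (Q + h) - B (P + h) := by fun_prop
    simpa using (this.tendsto 0).mono_left (nhdsWithin_le_nhds (s := Ioi 0))
  have hR := ((((hBlim.add (tendsto_const_nhds (x := A Q - A P))).sub (hIΦ.const_mul c)).sub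
    (hIΨ.const_mul c)).sub hLA).sub hLB
  refine (le_of_tendsto_of_tendsto hL hR ?_).trans_eq ?_
  · filter_upwards [Ioo_mem_nhdsGT (zero_lt_one' ℝ)] with h hh
    have hβs : IntervalIntegrable (fun t => β (t + h)) volume P Q :=
      (hβ.comp_add_right h).intervalIntegrable
    have hαi : IntervalIntegrable α volume P Q := hα.intervalIntegrable
    have i1 : IntervalIntegrable (fun t => β (t + h) + α t) volume P Q := hβs.add hαi
    have i2 : IntervalIntegrable (fun t => c * Φ h t) volume P Q :=
      (continuous_const.mul (hΦh h)).intervalIntegrable _ _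
    have i3 : IntervalIntegrable (fun t => c * Ψ h t) volume P Q :=
      (continuous_const.mul (hΨh h)).intervalIntegrable _ _
    have i4 : IntervalIntegrable (fun t => A (t + h) - A t) volume P Q :=
      Continuous.intervalIntegrable (by fun_prop) _ _
    have i5 : IntervalIntegrable (fun t => B (t + h) - B t) volume P Q :=
      Continuous.intervalIntegrable (by fun_prop) _ _
    have i6 : IntervalIntegrable (fun t => D (t + h) (t + h) - D t t) volume P Q :=
      ((hF.comp (continuous_add_const h)).sub hF).intervalIntegrable _ _
    have i7 : IntervalIntegrable
      (fun t => h * (β (t + h) + α t - c * Φ h t - c * Ψ h t)) volume P Q :=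
      ((i1.sub i2).sub i3).const_mul h
    have hmono := intervalIntegral.integral_mono_ae_restrict hPQ i6 ((i7.sub i4).sub i5)
      ((ae_restrict_iff' measurableSet_Icc).2 (hptwise h hh))
    rw [intervalIntegral.integral_sub (i7.sub i4) i5, intervalIntegral.integral_sub i7 i4,
      intervalIntegral.integral_const_mul, intervalIntegral.integral_sub (i1.sub i2) i3,
      intervalIntegral.integral_sub i1 i2, intervalIntegral.integral_add hβs hαi,
      intervalIntegral.integral_const_mul, intervalIntegral.integral_const_mul,
      intervalIntegral.integral_comp_add_right, hAsub, hBsub] at hmono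
    have hpos := hh.1
    have := mul_le_mul_of_nonneg_left hmono (inv_nonneg.2 hpos.le)
    refine this.trans_eq ?_
    field_simp
  · rw [intervalIntegral.integral_const_mul]
    ring

/-! ### Trajectories in integral form -/

theorem AbsContOn.absolutelyContinuousOnInterval {Y : Type*} [MetricSpace Y] {y : ℝ → Y}
    {p q : ℝ} (hpq : p ≤ q) (h : AbsContOn y p q) : AbsolutelyContinuousOnInterval y p q := by
  obtain ⟨g, hg0, hgi, hg⟩ := h
  have hgI : IntervalIntegrable g volume p q :=
    (intervalIntegrable_iff_integrableOn_Icc_of_le hpq).2 hgi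
  have hG := hgI.absolutelyContinuousOnInterval_intervalIntegral (c := p) left_mem_uIcc
  have hdist : ∀ s ∈ uIcc p q, ∀ t ∈ uIcc p q,
      dist (y s) (y t) ≤ dist (∫ r in p..s, g r) (∫ r in p..t, g r) := by
    rw [uIcc_of_le hpq]
    have aux : ∀ s ∈ Icc p q, ∀ t ∈ Icc p q, s ≤ t →
        dist (y s) (y t) ≤ dist (∫ r in p..s, g r) (∫ r in p..t, g r) := by
      intro s hs t ht hst
      rw [dist_comm (∫ r in p..s, g r), Real.dist_eq,
        intervalIntegral.integral_interval_sub_left]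
      · exact (hg s hs t ht hst).trans (le_abs_self _)
      · exact hgI.mono_set (by rw [uIcc_of_le ht.1, uIcc_of_le hpq]; exact Icc_subset_Icc_right ht.2)
      · exact hgI.mono_set (by rw [uIcc_of_le hs.1, uIcc_of_le hpq]; exact Icc_subset_Icc_right hs.2)
    intro s hs t ht
    rcases le_total s t with hst | hst
    · exact aux s hs t ht hst
    · rw [dist_comm (y s), dist_comm (∫ r in p..s, g r)]
      exact aux t ht s hs hst
  refine squeeze_zero' (Eventually.of_forall fun _ => Finset.sum_nonneg fun _ _ => dist_nonneg)
    ?_ hG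
  filter_upwards [mem_inf_of_right (mem_principal_self _)] with I hI
  exact Finset.sum_le_sum fun i hi => hdist _ (hI.1 i hi).1 _ (hI.1 i hi).2

theorem AbsolutelyContinuousOnInterval.dist_const {Y : Type*} [MetricSpace Y] {y : ℝ → Y}
    {p q : ℝ} (h : AbsolutelyContinuousOnInterval y p q) (z : Y) :
    AbsolutelyContinuousOnInterval (fun t => dist (y t) z) p q :=
  squeeze_zero (fun _ => Finset.sum_nonneg fun _ _ => dist_nonneg)
    (fun _ => Finset.sum_le_sum fun _ _ => dist_dist_dist_le_left _ _ _) h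

/-- The Evolution Variational Inequality in integral form, for a continuous curve `u` whose
energy `E (u t)` is almost everywhere equal to the real number `e t`. -/
structure IntegralEVI {Y : Type*} [MetricSpace Y] (lam : ℝ) (E : Y → EReal) (u : ℝ → Y)
    (e : ℝ → ℝ) : Prop where
  continuous : Continuous u
  integrable : ∀ p q, 0 < p → p ≤ q → IntervalIntegrable e volume p q
  energy : ∀ᵐ t, 0 < t → E (u t) = e t
  sub_le : ∀ (z : Y) (c : ℝ), E z = c → ∀ p q, 0 < p → p ≤ q →
    dist (u q) z ^ 2 / 2 - dist (u p) z ^ 2 / 2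
      ≤ ∫ r in p..q, (c - e r - lam * (dist (u r) z ^ 2 / 2))

theorem GradientFlow.integralEVI {Y : Type*} [MetricSpace Y] {lam : ℝ} {E : Y → EReal}
    (hE0 : ∀ y, (0 : EReal) ≤ E y) (hlsc : LowerSemicontinuous E) {a x₀ : Y} (hx₀ : E x₀ ≠ ⊤)
    {y : ℝ → Y} (hy : GradientFlow lam E a y) :
    IntegralEVI lam E (fun t => if 0 < t then y t else a)
      (fun t => (E (if 0 < t then y t else a)).toReal) := by
  obtain ⟨hac, hlim, hevi⟩ := hy
  set u : ℝ → Y := fun t => if 0 < t then y t else a with hu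
  have hupos : ∀ t, 0 < t → u t = y t := fun t ht => if_pos ht
  have hbot : ∀ x, E x ≠ ⊥ := fun x h => by simpa [h] using hE0 x
  have hcont : Continuous u := by
    rw [continuous_iff_continuousAt]
    intro t
    rcases lt_trichotomy t 0 with ht | rfl | ht
    · refine (continuousAt_const (y := a)).congr ?_
      filter_upwards [gt_mem_nhds ht] with s hs
      exact (if_neg hs.not_gt).symm
    · have h0 : u 0 = a := if_neg (lt_irrefl 0)
      rw [ContinuousAt, h0, ← nhdsLE_sup_nhdsGT, tendsto_sup]
      refine ⟨tendsto_const_nhds.congr' ?_, hlim.congr' ?_⟩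
      · filter_upwards [self_mem_nhdsWithin] with s hs
        exact (if_neg (not_lt.2 hs)).symm
      · filter_upwards [self_mem_nhdsWithin] with s hs
        exact (hupos s hs).symm
    · have ht2 : t / 2 ≤ 2 * t := by linarith
      have h1 := (((hac (t / 2) (2 * t) (by linarith) ht2
        ).absolutelyContinuousOnInterval ht2).dist_const (y t)).continuousOn
      rw [uIcc_of_le ht2] at h1
      have h2 : ContinuousAt y t := by
        rw [ContinuousAt, tendsto_iff_dist_tendsto_zero, ← dist_self (y t)]
        exact h1.continuousAt (Icc_mem_nhds (by linarith) (by linarith))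
      refine h2.congr ?_
      filter_upwards [lt_mem_nhds ht] with s hs
      exact (hupos s hs).symm
  have hevi' : ∀ (z : Y) (c : ℝ), E z = c → ∀ᵐ t, 0 < t →
      E (u t) = ((E (u t)).toReal : EReal) ∧
        deriv (fun s => dist (y s) z ^ 2 / 2) t
          ≤ c - (E (u t)).toReal - lam * (dist (u t) z ^ 2 / 2) := by
    intro z c hc
    filter_upwards [(ae_restrict_iff' measurableSet_Ioi).1 (hevi z)] with t ht htpos
    obtain ⟨d', hd', hle⟩ := ht htpos
    rw [hupos t htpos, hd'.deriv]
    have htop : E (y t) ≠ ⊤ := by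
      intro h
      rw [h, hc, EReal.coe_add_top, EReal.top_add_coe] at hle
      exact EReal.coe_ne_top c (top_le_iff.1 hle)
    have hcoe := EReal.coe_toReal htop (hbot _)
    refine ⟨hcoe.symm, ?_⟩
    rw [← hcoe, hc] at hle
    norm_cast at hle
    linarith
  have hint : ∀ (z : Y) (c : ℝ), E z = c → ∀ p q, 0 < p → p ≤ q →
      IntervalIntegrable (fun t => (E (u t)).toReal) volume p q ∧
      dist (u q) z ^ 2 / 2 - dist (u p) z ^ 2 / 2
        ≤ ∫ r in p..q, (c - (E (u r)).toReal - lam * (dist (u r) z ^ 2 / 2)) := by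
    intro z c hc p q hp hpq
    have hdist := ((hac p q hp hpq).absolutelyContinuousOnInterval hpq).dist_const z
    have hf : AbsolutelyContinuousOnInterval (fun s => dist (y s) z ^ 2 / 2) p q := by
      convert (hdist.mul hdist).const_mul (1 / 2) using 2 with s
      simp only [Pi.mul_apply]; ring
    have hderiv := hf.intervalIntegrable_deriv
    have hdc : Continuous fun t => lam * (dist (u t) z ^ 2 / 2) := by fun_prop
    have hae : ∀ᵐ t, t ∈ Icc p q → deriv (fun s => dist (y s) z ^ 2 / 2) t
          ≤ c - (E (u t)).toReal - lam * (dist (u t) z ^ 2 / 2) := by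
      filter_upwards [hevi' z c hc] with t ht htpq
      exact (ht (hp.trans_le htpq.1)).2
    have hmeas : Measurable fun t => (E (u t)).toReal :=
      (hlsc.comp hcont).measurable.ereal_toReal
    have hi : IntervalIntegrable (fun t => (E (u t)).toReal) volume p q := by
      refine ((intervalIntegrable_const (c := c)).sub hderiv |>.sub
        (hdc.intervalIntegrable _ _)).mono_fun hmeas.aestronglyMeasurable ?_
      rw [uIoc_of_le hpq]
      refine (ae_restrict_iff' measurableSet_Ioc).2 ?_
      filter_upwards [hae] with t ht htpq
      have h1 := ht (Ioc_subset_Icc_self htpq)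
      have h0 : 0 ≤ (E (u t)).toReal := EReal.toReal_nonneg (hE0 _)
      rw [Real.norm_of_nonneg h0]
      refine le_trans ?_ (Real.le_norm_self _)
      linarith
    refine ⟨hi, ?_⟩
    rw [hupos q (hp.trans_le hpq), hupos p hp]
    rw [← hf.integral_deriv_eq_sub]
    exact intervalIntegral.integral_mono_ae_restrict hpq hderiv
      ((intervalIntegrable_const.sub hi).sub (hdc.intervalIntegrable _ _))
      ((ae_restrict_iff' measurableSet_Icc).2 hae)
  have hcoe₀ := (EReal.coe_toReal hx₀ (hbot _)).symm
  refine ⟨hcont, fun p q hp hpq => (hint x₀ _ hcoe₀ p q hp hpq).1, ?_,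
    fun z c hc p q hp hpq => (hint z c hc p q hp hpq).2⟩
  filter_upwards [hevi' x₀ _ hcoe₀] with t ht htpos
  exact (ht htpos).1

namespace IntegralEVI

variable {Y : Type*} [MetricSpace Y] {lam : ℝ} {E : Y → EReal} {u v : ℝ → Y} {e f : ℝ → ℝ}

theorem shift (h : IntegralEVI lam E u e) {T : ℝ} (hT : 0 ≤ T) :
    IntegralEVI lam E (fun t => u (t + T)) (fun t => e (t + T)) where
  continuous := h.continuous.comp (continuous_add_const T)
  integrable p q hp hpq := by
    simpa using (h.integrable (p + T) (q + T) (by linarith) (by linarith)).comp_add_right T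
  energy := by
    filter_upwards [(measurePreserving_add_right volume T).quasiMeasurePreserving.ae h.energy]
      with t ht htpos
    exact ht (by linarith)
  sub_le z c hc p q hp hpq := by
    rw [intervalIntegral.integral_comp_add_right
      (f := fun r => c - e r - lam * (dist (u r) z ^ 2 / 2))]
    exact h.sub_le z c hc (p + T) (q + T) (by linarith) (by linarith)

/-- Exponential contraction of two trajectories. -/
theorem dist_sq_le (hu : IntegralEVI lam E u e) (hv : IntegralEVI lam E v f) {s : ℝ}
    (hs : 0 ≤ s) : dist (u s) (v s) ^ 2 ≤ Real.exp (-2 * lam * s) * dist (u 0) (v 0) ^ 2 := by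
  have huc := hu.continuous
  have hvc := hv.continuous
  have hdiag : ∀ P Q, 0 < P → P ≤ Q →
      dist (u Q) (v Q) ^ 2 / 2 - dist (u P) (v P) ^ 2 / 2
        ≤ ∫ r in P..Q, (-(2 * lam)) * (dist (u r) (v r) ^ 2 / 2) := by
    intro P Q hP hPQ
    have hPQ' : P ≤ Q + 1 := by linarith
    have hcongr : ∀ (g : ℝ → ℝ) (k : ℝ → ℝ) (c p q : ℝ), P ≤ p → p ≤ q → q ≤ Q + 1 →
        ∫ r in p..q, (c - (Icc P (Q + 1)).indicator g r - k r) = ∫ r in p..q, (c - g r - k r) := by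
      intro g k c p q hp hpq hq
      refine intervalIntegral.integral_congr fun r hr => ?_
      rw [uIcc_of_le hpq] at hr
      have : r ∈ Icc P (Q + 1) := ⟨hp.trans hr.1, hr.2.trans hq⟩
      simp only [indicator_of_mem this]
    refine diag_sub_le_of_partial (D := fun s t => dist (u s) (v t) ^ 2 / 2)
      (α := (Icc P (Q + 1)).indicator e) (β := (Icc P (Q + 1)).indicator f)
      (by unfold Function.uncurry; fun_prop)
      ((integrable_indicator_iff measurableSet_Icc).2
        ((intervalIntegrable_iff_integrableOn_Icc_of_le hPQ').1 (hu.integrable _ _ hP hPQ')))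
      ((integrable_indicator_iff measurableSet_Icc).2
        ((intervalIntegrable_iff_integrableOn_Icc_of_le hPQ').1 (hv.integrable _ _ hP hPQ')))
      hPQ ?_ ?_
    · filter_upwards [hv.energy] with t ht htm p q hp hpq hq
      rw [hcongr e _ _ p q hp hpq hq, indicator_of_mem htm]
      exact hu.sub_le (v t) (f t) (ht (hP.trans_le htm.1)) p q (hP.trans_le hp) hpq
    · filter_upwards [hu.energy] with t ht htm p q hp hpq hq
      rw [hcongr f _ _ p q hp hpq hq, indicator_of_mem htm]
      simp only [dist_comm (u t)]
      exact hv.sub_le (u t) (e t) (ht (hP.trans_le htm.1)) p q (hP.trans_le hp) hpq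
  have hF : Continuous fun t => dist (u t) (v t) ^ 2 / 2 := by fun_prop
  have := le_mul_exp_of_sub_le_intervalIntegral hF
    (fun p q hp hpq => sub_le_intervalIntegral_of_pos hF (continuous_const.mul hF) hdiag hp hpq) hs
  rw [neg_mul]
  linarith

/-- A trajectory leaves its starting point at most as fast as the comparison solution. -/
theorem dist_le_gronwallBound (h : IntegralEVI lam E u e) {A S : ℝ} (hA : E (u 0) = A)
    (hS : 0 ≤ S) (hslope : ∀ (z : Y) (c : ℝ), E z = c →
      A - c ≤ S * dist z (u 0) - lam / 2 * dist z (u 0) ^ 2) {t : ℝ} (ht : 0 ≤ t) :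
    dist (u t) (u 0) ≤ gronwallBound 0 (-lam) S t := by
  have huc := h.continuous
  have hδ : Continuous fun t => dist (u t) (u 0) := by fun_prop
  refine le_gronwallBound_of_half_sq_sub_le hδ (dist_self _) (fun _ => dist_nonneg) hS
    (fun p q hp hpq => sub_le_intervalIntegral_of_pos (f := fun t => dist (u t) (u 0) ^ 2 / 2)
      (by fun_prop) (by fun_prop) ?_ hp hpq) ht
  intro p q hp hpq
  have hc1 : Continuous fun r => lam * (dist (u r) (u 0) ^ 2 / 2) := by fun_prop
  have hc2 : Continuous fun r => S * dist (u r) (u 0) - lam * dist (u r) (u 0) ^ 2 := by fun_prop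
  refine (h.sub_le _ A hA p q hp hpq).trans ?_
  refine intervalIntegral.integral_mono_ae_restrict hpq
    ((intervalIntegrable_const.sub (h.integrable p q hp hpq)).sub (hc1.intervalIntegrable _ _))
    (hc2.intervalIntegrable _ _) ((ae_restrict_iff' measurableSet_Icc).2 ?_)
  filter_upwards [h.energy] with r hr hrm
  have := hslope _ _ (hr (hp.trans_le hrm.1))
  linarith

/-- The estimate of the distance to a fixed point of finite energy. -/
theorem dist_sq_le_of_slope (h : IntegralEVI lam E u e) {A B S : ℝ} {b : Y} (hA : E (u 0) = A)
    (hB : E b = B) (hS : 0 ≤ S) (hslope : ∀ (z : Y) (c : ℝ), E z = c →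
      A - c ≤ S * dist z (u 0) - lam / 2 * dist z (u 0) ^ 2) {T : ℝ} (hT : 0 ≤ T) :
    dist (u T) b ^ 2 ≤ dist (u 0) b ^ 2 + 2 * T * (B - A)
      + 2 * S ^ 2 * (∫ r in (0:ℝ)..T, ∫ q in (0:ℝ)..r, Real.exp (-2 * lam * q))
      - lam * ∫ r in (0:ℝ)..T, dist (u r) b ^ 2 := by
  have huc := h.continuous
  set θ : ℝ → ℝ := fun r => ∫ q in (0:ℝ)..r, Real.exp (-2 * lam * q) with hθ
  have hθc : Continuous θ := intervalIntegral.continuous_primitive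
    (fun _ _ => Continuous.intervalIntegrable (by fun_prop) _ _) 0
  have hc1 : Continuous fun r => lam * (dist (u r) b ^ 2 / 2) := by fun_prop
  have hc2 : Continuous fun r => S ^ 2 * θ r := by fun_prop
  have hc3 : Continuous fun r => (B - A) + S ^ 2 * θ r - lam * (dist (u r) b ^ 2 / 2) := by
    fun_prop
  have key := sub_le_intervalIntegral_of_pos (f := fun t => dist (u t) b ^ 2 / 2)
    (by fun_prop) hc3 (fun p q hp hpq => ?_) le_rfl hT
  · rw [intervalIntegral.integral_sub
        ((intervalIntegrable_const).add (hc2.intervalIntegrable _ _)) (hc1.intervalIntegrable _ _),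
      intervalIntegral.integral_add intervalIntegrable_const (hc2.intervalIntegrable _ _),
      intervalIntegral.integral_const, intervalIntegral.integral_const_mul,
      intervalIntegral.integral_const_mul, intervalIntegral.integral_div] at key
    simp only [sub_zero, smul_eq_mul] at key
    linarith
  · refine (h.sub_le b B hB p q hp hpq).trans ?_
    refine intervalIntegral.integral_mono_ae_restrict hpq
      ((intervalIntegrable_const.sub (h.integrable p q hp hpq)).sub (hc1.intervalIntegrable _ _))
      (hc3.intervalIntegrable _ _) ((ae_restrict_iff' measurableSet_Icc).2 ?_)
    filter_upwards [h.energy] with r hr hrm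
    have hr0 : 0 < r := hp.trans_le hrm.1
    have h1 := hslope _ _ (hr hr0)
    have h2 := mul_sub_half_sq_le_of_le_gronwallBound hS
      (h.dist_le_gronwallBound hA hS hslope hr0.le) dist_nonneg
    change _ ≤ S ^ 2 * θ r at h2
    linarith

end IntegralEVI

/-- For a `λ`-convex functional the descending slope controls the energy drop globally. -/
theorem LamConvex.sub_le_descendingSlope_mul {Y : Type*} [MetricSpace Y] (hY : GeodesicSpace Y)
    {lam : ℝ} {E : Y → EReal} (hE0 : ∀ y, (0 : EReal) ≤ E y) (hconv : LamConvex lam E)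
    {a : Y} {A : ℝ} (hA : E a = A) (hS : descendingSlope E a ≠ ⊤) {z : Y} {c : ℝ}
    (hc : E z = c) :
    A - c ≤ (descendingSlope E a).toReal * dist z a - lam / 2 * dist z a ^ 2 := by
  set S := (descendingSlope E a).toReal with hSdef
  rcases eq_or_ne z a with rfl | hza
  · have : A = c := by rw [hA] at hc; exact_mod_cast hc
    simp [this]
  have hd : 0 < dist z a := dist_pos.2 hza
  set d := dist z a with hddef
  obtain ⟨γ, hγ, h0, h1⟩ := hY a z
  have hγd : ∀ τ ∈ Icc (0:ℝ) 1, dist a (γ τ) = τ * d := by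
    intro τ hτ
    have := hγ 0 ⟨le_rfl, zero_le_one⟩ τ hτ
    rw [h0, h1, zero_sub, abs_neg, abs_of_nonneg hτ.1, dist_comm a z] at this
    exact this
  have hγlim : Tendsto γ (𝓝[>] 0) (𝓝[≠] a) := by
    refine tendsto_nhdsWithin_iff.2 ⟨?_, ?_⟩
    · rw [tendsto_iff_dist_tendsto_zero]
      have : Tendsto (fun τ : ℝ => τ * d) (𝓝[>] 0) (𝓝 0) := by
        simpa using ((continuous_mul_const d).tendsto 0).mono_left
          (nhdsWithin_le_nhds (s := Ioi 0))
      refine this.congr' ?_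
      filter_upwards [Ioo_mem_nhdsGT (zero_lt_one' ℝ)] with τ hτ
      rw [dist_comm, hγd τ (Ioo_subset_Icc_self hτ)]
    · filter_upwards [Ioo_mem_nhdsGT (zero_lt_one' ℝ)] with τ hτ
      have := hγd τ (Ioo_subset_Icc_self hτ)
      exact (dist_pos.1 (this ▸ mul_pos hτ.1 hd)).symm
  have hquot : ∀ τ ∈ Ioo (0:ℝ) 1,
      (A - c) / d + lam / 2 * (1 - τ) * d ≤ (E a - E (γ τ)).toReal / dist a (γ τ) := by
    intro τ hτ
    have hle := hconv γ hγ τ (Ioo_subset_Icc_self hτ)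
    rw [h0, h1, hA, hc, dist_comm a z] at hle
    norm_cast at hle
    have htop : E (γ τ) ≠ ⊤ := fun h => by
      rw [h] at hle; exact EReal.coe_ne_top _ (top_le_iff.1 hle)
    have hbot : E (γ τ) ≠ ⊥ := fun h => by simpa [h] using hE0 (γ τ)
    rw [← EReal.coe_toReal htop hbot] at hle ⊢
    rw [hA, hγd τ (Ioo_subset_Icc_self hτ)]
    norm_cast at hle ⊢
    rw [EReal.toReal_coe, le_div_iff₀ (mul_pos hτ.1 hd)]
    have : ((A - c) / d + lam / 2 * (1 - τ) * d) * (τ * d)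
        = τ * (A - c) + lam / 2 * τ * (1 - τ) * d ^ 2 := by field_simp
    rw [this]
    linarith
  have hM : ∀ M, S < M → (A - c) / d + lam / 2 * d ≤ M := by
    intro M hSM
    have hMpos : 0 < M := ENNReal.toReal_nonneg.trans_lt hSM
    have hlt : descendingSlope E a < ENNReal.ofReal M := by
      rw [← ENNReal.ofReal_toReal hS]
      exact (ENNReal.ofReal_lt_ofReal_iff hMpos).2 hSM
    rw [descendingSlope, if_neg (by rw [hA]; exact EReal.coe_ne_top _)] at hlt
    have hev := hγlim.eventually (eventually_lt_of_limsup_lt hlt)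
    have hcont : Continuous fun τ : ℝ => (A - c) / d + lam / 2 * (1 - τ) * d := by fun_prop
    have hlim := (hcont.tendsto 0).mono_left (nhdsWithin_le_nhds (s := Ioi 0))
    simp only [sub_zero, mul_one] at hlim
    refine le_of_tendsto hlim ?_
    filter_upwards [hev, Ioo_mem_nhdsGT (zero_lt_one' ℝ)] with τ hτ hτm
    exact (hquot τ hτm).trans ((ENNReal.ofReal_lt_ofReal_iff hMpos).1 hτ).le
  have := le_of_forall_gt_imp_ge_of_dense hM
  have h2 := mul_le_mul_of_nonneg_right this hd.le
  have h3 : ((A - c) / d + lam / 2 * d) * d = (A - c) + lam / 2 * d ^ 2 := by field_simp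
  linarith

theorem intervalIntegral_intervalIntegral_exp_pos (lam : ℝ) {T : ℝ} (hT : 0 < T) :
    0 < ∫ r in (0:ℝ)..T, ∫ q in (0:ℝ)..r, Real.exp (-2 * lam * q) := by
  have hexp : Continuous fun q => Real.exp (-2 * lam * q) := by fun_prop
  refine intervalIntegral.intervalIntegral_pos_of_pos_on ?_ (fun r hr => ?_) hT
  · exact (intervalIntegral.continuous_primitive
      (fun _ _ => hexp.intervalIntegrable _ _) 0).intervalIntegrable _ _
  · exact intervalIntegral.intervalIntegral_pos_of_pos (hexp.intervalIntegrable _ _)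
      (fun _ => Real.exp_pos _) hr.1

/-- **A priori estimate for gradient flows** of a nonnegative `λ`-convex lower
semicontinuous functional on a CAT(0) space: for `t ≥ s > 0`,
`d²(y_t, z_s) ≤ e^{−2λs}(d²(y,z) + 2(t−s)(E(z)−E(y)) + 2|∂⁻E|²(y)∫₀^{t−s}θ_λ(r)dr
− λ∫₀^{t−s} d²(y_r, z) dr)` where `θ_λ(r) = ∫₀^r e^{−2λq} dq`. -/
theorem gradientFlow_apriori_estimate {Y : Type*} [MetricSpace Y] [CompleteSpace Y]
    (hY : Cat0 Y) (lam : ℝ) (E : Y → EReal) (hE0 : ∀ y, (0 : EReal) ≤ E y)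
    (hconv : LamConvex lam E) (hlsc : LowerSemicontinuous E)
    (a b : Y) (hEa : E a ≠ ⊤) (ytraj ztraj : ℝ → Y)
    (hy : GradientFlow lam E a ytraj) (hz : GradientFlow lam E b ztraj)
    (s t : ℝ) (hs : 0 < s) (hst : s ≤ t) :
    ((dist (ytraj t) (ztraj s) ^ 2 : ℝ) : EReal) ≤
      ((Real.exp (-2 * lam * s) : ℝ) : EReal) *
        ( ((dist a b ^ 2 : ℝ) : EReal)
          + ((2 * (t - s) : ℝ) : EReal) * (E b - E a)
          + ((2 * descendingSlope E a ^ 2 *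
                ENNReal.ofReal (∫ r in (0:ℝ)..(t - s),
                  ∫ q in (0:ℝ)..r, Real.exp (-2 * lam * q)) : ℝ≥0∞) : EReal)
          + ((-(lam * ∫ r in (0:ℝ)..(t - s), dist (ytraj r) b ^ 2) : ℝ) : EReal) ) := by
  have hbot : ∀ x, E x ≠ ⊥ := fun x h => by simpa [h] using hE0 x
  have hu := hy.integralEVI hE0 hlsc hEa
  have hv := hz.integralEVI hE0 hlsc hEa
  set u : ℝ → Y := fun t => if 0 < t then ytraj t else a with hudef
  set v : ℝ → Y := fun t => if 0 < t then ztraj t else b with hvdef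
  have hu0 : u 0 = a := if_neg (lt_irrefl 0)
  have hv0 : v 0 = b := if_neg (lt_irrefl 0)
  have hut : ∀ r, 0 < r → ytraj r = u r := fun r hr => (if_pos hr).symm
  have hvs : ztraj s = v s := (if_pos hs).symm
  have hT : 0 ≤ t - s := sub_nonneg.2 hst
  have hcontr := (hu.shift hT).dist_sq_le hv hs.le
  simp only [add_sub_cancel, zero_add, hv0] at hcontr
  rw [hut t (hs.trans_le hst), hvs]
  rcases hT.eq_or_lt with hT0 | hTpos
  · rw [← hT0, hu0] at hcontr
    rw [← hT0]
    simp only [mul_zero, EReal.coe_zero, zero_mul, add_zero, intervalIntegral.integral_same,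
      ENNReal.ofReal_zero, EReal.coe_ennreal_zero, neg_zero]
    exact_mod_cast hcontr
  have hI := intervalIntegral_intervalIntegral_exp_pos lam hTpos
  set I := ∫ r in (0:ℝ)..(t - s), ∫ q in (0:ℝ)..r, Real.exp (-2 * lam * q) with hIdef
  obtain ⟨A, hA⟩ : ∃ A : ℝ, E a = A := ⟨_, (EReal.coe_toReal hEa (hbot a)).symm⟩
  have hexp := Real.exp_pos (-2 * lam * s)
  have h2T : 0 < 2 * (t - s) := by linarith
  by_cases hEb : E b = ⊤
  · rw [hEb, hA, EReal.top_sub_coe, EReal.coe_mul_top_of_pos h2T, EReal.coe_add_top,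
      EReal.top_add_of_ne_bot (EReal.coe_ennreal_ne_bot _), EReal.top_add_coe,
      EReal.coe_mul_top_of_pos hexp]
    exact le_top
  obtain ⟨B, hB⟩ : ∃ B : ℝ, E b = B := ⟨_, (EReal.coe_toReal hEb (hbot b)).symm⟩
  rw [hA, hB]
  by_cases hS : descendingSlope E a = ⊤
  · have htop : 2 * descendingSlope E a ^ 2 * ENNReal.ofReal I = ⊤ := by
      rw [hS, ENNReal.top_pow two_ne_zero, ENNReal.mul_top two_ne_zero,
        ENNReal.top_mul (ENNReal.ofReal_pos.2 hI).ne']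
    rw [htop, EReal.coe_ennreal_top, ← EReal.coe_sub, ← EReal.coe_mul, ← EReal.coe_add,
      EReal.coe_add_top, EReal.top_add_coe, EReal.coe_mul_top_of_pos hexp]
    exact le_top
  have hterm : ((2 * descendingSlope E a ^ 2 * ENNReal.ofReal I : ℝ≥0∞) : EReal)
      = ((2 * (descendingSlope E a).toReal ^ 2 * I : ℝ) : EReal) := by
    have hfin : 2 * descendingSlope E a ^ 2 * ENNReal.ofReal I ≠ ⊤ := by finiteness
    rw [← EReal.coe_ennreal_toReal hfin]
    simp [ENNReal.toReal_ofReal hI.le]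
  have hint : ∫ r in (0:ℝ)..(t - s), dist (ytraj r) b ^ 2
      = ∫ r in (0:ℝ)..(t - s), dist (u r) b ^ 2 := by
    refine intervalIntegral.integral_congr_ae (Eventually.of_forall fun r hr => ?_)
    rw [uIoc_of_le hT] at hr
    rw [hut r hr.1]
  have hdist := hu.dist_sq_le_of_slope (hu0.symm ▸ hA) hB ENNReal.toReal_nonneg
    (fun z c hc => hu0.symm ▸ hconv.sub_le_descendingSlope_mul hY.1 hE0 hA hS hc) hT
  rw [hu0, ← hIdef] at hdist
  rw [hterm, hint, ← EReal.coe_sub, ← EReal.coe_mul, ← EReal.coe_add, ← EReal.coe_add,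
    ← EReal.coe_add, ← EReal.coe_mul, EReal.coe_le_coe_iff]
  refine hcontr.trans (mul_le_mul_of_nonneg_left ?_ hexp.le)
  linarith
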